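/- Let a > 0, L > 0, α > 0, and let G_n^a denote the Gegenbauer polynomial of degree n and order a. Define the fractional rational Gegenbauer function FRG_n^a(L, α, x) = G_n^a((x^α − L)/(x^α + L)) for x > 0 and the weight w(x) = (1 − ((x^α − L)/(x^α + L))²)^{a − 1/2} · 2αL x^{α−1}/(x^α + L)². Then for all integers n, m ≥ 0, ∫₀^∞ FRG_n^a(L, α, x) · FRG_m^a(L, α, x) · w(x) dx = (π 2^{1−2a} Γ(n + 2a))/(n! (n + a) Γ(a)²) · δ_{nm}, where δ_{nm} is the Kronecker delta. -/

import Mathlib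

open MeasureTheory

/-- The Gegenbauer polynomial of degree `n` and order `a`, defined by the
explicit sum `G_n^a(x) = Σ_{j=0}^{⌊n/2⌋} (−1)^j Γ(n+a−j)/(j!(n−2j)!Γ(a)) (2x)^{n−2j}`. -/
noncomputable def Geg (a : ℝ) (n : ℕ) (x : ℝ) : ℝ :=
  ∑ j ∈ Finset.range (n / 2 + 1),
    (-1 : ℝ) ^ j * Real.Gamma ((n : ℝ) + a - (j : ℝ)) /
      ((Nat.factorial j : ℝ) * (Nat.factorial (n - 2 * j) : ℝ) * Real.Gamma a) *
      (2 * x) ^ (n - 2 * j)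

/-- The fractional rational Gegenbauer function `FRG_n^a(L, α, x) = G_n^a((x^α − L)/(x^α + L))`. -/
noncomputable def FRG (a L α : ℝ) (n : ℕ) (x : ℝ) : ℝ :=
  Geg a n ((x ^ α - L) / (x ^ α + L))

/-- The weight `w(x) = (1 − ((x^α − L)/(x^α + L))²)^{a−1/2} · 2αL x^{α−1}/(x^α + L)²`. -/
noncomputable def FRGweight (a L α : ℝ) (x : ℝ) : ℝ :=
  (1 - ((x ^ α - L) / (x ^ α + L)) ^ 2) ^ (a - 1 / 2) *
    (2 * α * L * x ^ (α - 1) / (x ^ α + L) ^ 2)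

lemma Gamma_step {x y c : ℝ} (hx : 0 < x) (hy : y = x + 1) (hc : c = x) :
    Real.Gamma y = c * Real.Gamma x := by
  rw [hy, hc, Real.Gamma_add_one (ne_of_gt hx)]

/-- Coefficient of `X^(n-2j)`. -/
noncomputable def gc (a : ℝ) (n j : ℕ) : ℝ :=
  if 2 * j ≤ n then
    (-1 : ℝ) ^ j * Real.Gamma ((n : ℝ) + a - (j : ℝ)) /
      ((Nat.factorial j : ℝ) * (Nat.factorial (n - 2 * j) : ℝ) * Real.Gamma a) * 2 ^ (n - 2 * j)
  else 0

lemma gc_add (a : ℝ) (j k : ℕ) : gc a (2 * j + k) j =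
    (-1 : ℝ) ^ j * Real.Gamma (j + k + a) /
      ((Nat.factorial j : ℝ) * (Nat.factorial k : ℝ) * Real.Gamma a) * 2 ^ k := by
  have h : 2 * j + k - 2 * j = k := by omega
  rw [gc, if_pos (by omega), h]
  congr 5
  push_cast; ring

/-- The Gegenbauer polynomial as a polynomial. -/
noncomputable def GP (a : ℝ) (n : ℕ) : Polynomial ℝ :=
  ∑ j ∈ Finset.range (n / 2 + 1), Polynomial.C (gc a n j) * Polynomial.X ^ (n - 2 * j)

lemma GP_eval (a : ℝ) (n : ℕ) (x : ℝ) : (GP a n).eval x = Geg a n x := by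
  simp only [GP, Geg, Polynomial.eval_finsetSum, Polynomial.eval_mul, Polynomial.eval_C,
    Polynomial.eval_pow, Polynomial.eval_X]
  refine Finset.sum_congr rfl fun j hj => ?_
  have : 2 * j ≤ n := by have := Finset.mem_range.1 hj; omega
  rw [gc, if_pos this, mul_pow]; ring

lemma GP_eq (a : ℝ) (n N : ℕ) (h : n / 2 + 1 ≤ N) : GP a n =
    ∑ j ∈ Finset.range N, Polynomial.C (gc a n j) * Polynomial.X ^ (n - 2 * j) := by
  rw [GP]
  refine Finset.sum_subset (by simpa using h) fun j _ hj => ?_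
  have : ¬ 2 * j ≤ n := by simp at hj; omega
  simp [gc, this]

lemma gc_rec0 (a : ℝ) (ha : 0 < a) (n : ℕ) :
    ((n : ℝ) + 2) * gc a (n + 2) 0 = 2 * (n + 1 + a) * gc a (n + 1) 0 := by
  have h1 := gc_add a 0 (n + 2)
  have h2 := gc_add a 0 (n + 1)
  simp only [mul_zero, zero_add] at h1 h2
  rw [h1, h2]
  have hG : Real.Gamma (((0 : ℕ) : ℝ) + ((n + 2 : ℕ) : ℝ) + a) =
      (n + 1 + a) * Real.Gamma (((0 : ℕ) : ℝ) + ((n + 1 : ℕ) : ℝ) + a) := by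
    exact Gamma_step (by positivity) (by push_cast; ring) (by push_cast; ring)
  have := (Real.Gamma_pos_of_pos ha).ne'
  rw [hG, Nat.factorial_succ (n + 1)]
  push_cast
  field_simp
  ring

lemma gc_rec1 (a : ℝ) (ha : 0 < a) (n j : ℕ) :
    ((n : ℝ) + 2) * gc a (n + 2) (j + 1) =
      2 * (n + 1 + a) * gc a (n + 1) (j + 1) - (n + 2 * a) * gc a n j := by
  have hGa := (Real.Gamma_pos_of_pos ha).ne'
  rcases lt_trichotomy (2 * j) n with h | h | h
  · obtain ⟨k, rfl⟩ : ∃ k, n = 2 * j + (k + 1) := ⟨n - 2 * j - 1, by omega⟩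
    have h1 := gc_add a (j + 1) (k + 1)
    have h2 := gc_add a (j + 1) k
    have h3 := gc_add a j (k + 1)
    have e1 : 2 * j + (k + 1) + 2 = 2 * (j + 1) + (k + 1) := by ring
    have e2 : 2 * j + (k + 1) + 1 = 2 * (j + 1) + k := by ring
    rw [e1, e2, h1, h2, h3]
    have hG : Real.Gamma (((j + 1 : ℕ) : ℝ) + ((k + 1 : ℕ) : ℝ) + a) =
      (j + k + 1 + a) * Real.Gamma (((j : ℕ) : ℝ) + ((k + 1 : ℕ) : ℝ) + a) := by
      exact Gamma_step (by positivity) (by push_cast; ring) (by push_cast; ring)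
    have hG2 : Real.Gamma (((j + 1 : ℕ) : ℝ) + (k : ℝ) + a) =
      Real.Gamma (((j : ℕ) : ℝ) + ((k + 1 : ℕ) : ℝ) + a) := by
      push_cast; ring_nf
    rw [hG, hG2, Nat.factorial_succ k, Nat.factorial_succ j]
    push_cast
    field_simp
    ring
  · subst h
    have h1 := gc_add a (j + 1) 0
    have h3 := gc_add a j 0
    have e1 : 2 * j + 2 = 2 * (j + 1) + 0 := by ring
    have h2 : gc a (2 * j + 1) (j + 1) = 0 := by rw [gc, if_neg (by omega)]
    rw [add_zero] at h3
    rw [e1, h1, h2, h3]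
    have hG : Real.Gamma (((j + 1 : ℕ) : ℝ) + ((0 : ℕ) : ℝ) + a) =
      (j + a) * Real.Gamma (((j : ℕ) : ℝ) + ((0 : ℕ) : ℝ) + a) := by
      exact Gamma_step (by positivity) (by push_cast; ring) (by push_cast; ring)
    rw [hG, Nat.factorial_succ j]
    push_cast
    field_simp
    ring
  · rw [gc, gc, gc, if_neg (by omega), if_neg (by omega), if_neg (by omega)]; ring

open Polynomial in
lemma GP_rec (a : ℝ) (ha : 0 < a) (n : ℕ) :
    C ((n : ℝ) + 2) * GP a (n + 2) =
      C (2 * (n + 1 + a)) * (X * GP a (n + 1)) - C (n + 2 * a) * GP a n := by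
  rw [GP_eq a (n + 2) (n + 2 + 1) (by omega), GP_eq a (n + 1) (n + 2 + 1) (by omega),
    GP_eq a n (n + 2) (by omega), Finset.sum_range_succ' _ (n + 2), Finset.sum_range_succ' _ (n + 2)]
  have h0 : C ((n : ℝ) + 2) * (C (gc a (n + 2) 0) * X ^ (n + 2 - 2 * 0)) =
      C (2 * (n + 1 + a)) * (X * (C (gc a (n + 1) 0) * X ^ (n + 1 - 2 * 0))) := by
    rw [← mul_assoc, ← C_mul, gc_rec0 a ha, C_mul]
    simp only [mul_zero, Nat.sub_zero]
    ring
  have h1 : ∀ j : ℕ, C ((n : ℝ) + 2) * (C (gc a (n + 2) (j + 1)) * X ^ (n + 2 - 2 * (j + 1))) =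
      C (2 * (n + 1 + a)) * (X * (C (gc a (n + 1) (j + 1)) * X ^ (n + 1 - 2 * (j + 1)))) -
      C (n + 2 * a) * (C (gc a n j) * X ^ (n - 2 * j)) := by
    intro j
    rw [← mul_assoc, ← C_mul, gc_rec1 a ha, C_sub, C_mul, C_mul (a := (n : ℝ) + 2 * a)]
    have e : n + 2 - 2 * (j + 1) = n - 2 * j := by omega
    rw [e]
    by_cases h : 2 * j + 1 ≤ n
    · have e2 : n - 2 * j = n + 1 - 2 * (j + 1) + 1 := by omega
      rw [e2, pow_succ]
      ring
    · have : gc a (n + 1) (j + 1) = 0 := by rw [gc, if_neg (by omega)]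
      rw [this]; simp; ring
  rw [mul_add (C ((n : ℝ) + 2)), h0, Finset.mul_sum, Finset.sum_congr rfl fun j _ => h1 j,
    Finset.sum_sub_distrib, ← Finset.mul_sum, ← Finset.mul_sum, ← Finset.mul_sum]
  ring

lemma gc_ode (a : ℝ) (ha : 0 < a) (n j : ℕ) :
    gc a n j * ((n - 2 * j : ℕ) : ℝ) * ((n - 2 * j - 1 : ℕ) : ℝ) =
      - (4 * (j + 1) * (n - (j + 1) + a) * gc a n (j + 1)) := by
  have hGa := (Real.Gamma_pos_of_pos ha).ne'
  by_cases h : 2 * j + 2 ≤ n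
  · obtain ⟨k, rfl⟩ : ∃ k, n = 2 * j + (k + 2) := ⟨n - 2 * j - 2, by omega⟩
    have e : 2 * j + (k + 2) - 2 * j = k + 2 := by omega
    rw [e, Nat.add_sub_assoc (by norm_num) k, gc_add,
      show 2 * j + (k + 2) = 2 * (j + 1) + k by ring, gc_add]
    have hG : Real.Gamma ((j : ℝ) + ((k + 2 : ℕ) : ℝ) + a) =
      (j + k + 1 + a) * Real.Gamma (((j + 1 : ℕ) : ℝ) + (k : ℝ) + a) := by
      exact Gamma_step (by positivity) (by push_cast; ring) (by push_cast; ring)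
    rw [hG, Nat.factorial_succ (k + 1), Nat.factorial_succ k, Nat.factorial_succ j]
    push_cast
    field_simp
    ring
  · have h1 : gc a n (j + 1) = 0 := by rw [gc, if_neg (by omega)]
    have h2 : n - 2 * j - 1 = 0 := by omega
    rw [h1, h2]; simp

open Polynomial in
lemma GP_ode (a : ℝ) (ha : 0 < a) (n : ℕ) :
    (1 - X ^ 2) * derivative (derivative (GP a n)) - C (2 * a + 1) * (X * derivative (GP a n)) =
      - (C ((n : ℝ) * (n + 2 * a)) * GP a n) := by
  rw [GP_eq a n (n + 1) (by omega)]
  let U : ℕ → ℝ[X] := fun j => C (4 * j * (n - j + a) * gc a n j) * X ^ (n - 2 * j)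
  have key : ∀ j : ℕ, (1 - X ^ 2) * derivative (derivative (C (gc a n j) * X ^ (n - 2 * j))) -
      C (2 * a + 1) * (X * derivative (C (gc a n j) * X ^ (n - 2 * j))) +
      C ((n : ℝ) * (n + 2 * a)) * (C (gc a n j) * X ^ (n - 2 * j)) = U j - U (j + 1) := by
    intro j
    have hd : derivative (derivative (C (gc a n j) * X ^ (n - 2 * j))) = - U (j + 1) := by
      simp only [U, derivative_C_mul_X_pow]
      rw [gc_ode a ha, show n - 2 * (j + 1) = n - 2 * j - 1 - 1 by omega]
      push_cast
      rw [C_neg, neg_mul]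
    have hx1 : X * derivative (C (gc a n j) * X ^ (n - 2 * j)) =
        C (gc a n j * ((n - 2 * j : ℕ) : ℝ)) * X ^ (n - 2 * j) := by
      rw [derivative_C_mul_X_pow]
      rcases Nat.eq_zero_or_pos (n - 2 * j) with h | h
      · simp [h]
      · obtain ⟨k, hk⟩ := Nat.exists_eq_add_of_lt h
        rw [hk]; simp [pow_succ]; ring
    have hx2 : X ^ 2 * derivative (derivative (C (gc a n j) * X ^ (n - 2 * j))) =
        C (gc a n j * ((n - 2 * j : ℕ) : ℝ) * (((n - 2 * j : ℕ) : ℝ) - 1)) * X ^ (n - 2 * j) := by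
      rw [derivative_C_mul_X_pow, derivative_C_mul_X_pow]
      rcases h : (n - 2 * j) with _ | _ | k
      · simp
      · simp
      · simp [pow_succ]; ring
    rw [sub_mul, one_mul, hx2, hx1, hd]
    by_cases h : 2 * j ≤ n
    · simp only [U]
      rw [Nat.cast_sub h]
      have : (4 * j * (n - j + a) * gc a n j) = (n : ℝ) * (n + 2 * a) * gc a n j
         - (2 * a + 1) * (gc a n j * ((n : ℝ) - (2 * j : ℕ)))
         - gc a n j * ((n : ℝ) - (2 * j : ℕ)) * (((n : ℝ) - (2 * j : ℕ)) - 1) := by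
        push_cast; ring
      rw [this, C_sub, C_sub, C_mul (a := (n : ℝ) * (n + 2 * a)), C_mul (a := 2 * a + 1)]
      ring
    · have : gc a n j = 0 := by rw [gc, if_neg h]
      simp [U, this]
  have hs := Finset.sum_congr (rfl : Finset.range (n + 1) = _) fun j _ => key j
  rw [Finset.sum_range_sub' U, Finset.sum_add_distrib, Finset.sum_sub_distrib, ← Finset.mul_sum,
    ← Finset.mul_sum, ← Finset.mul_sum, ← Finset.mul_sum] at hs
  have hU0 : U 0 = 0 := by simp [U]
  have hUn : U (n + 1) = 0 := by simp only [U]; rw [gc, if_neg (by omega)]; simp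
  rw [hU0, hUn, sub_zero] at hs
  simp only [derivative_sum]
  exact eq_neg_of_add_eq_zero_left hs

/-- The Gegenbauer weight. -/
noncomputable def gw (a t : ℝ) : ℝ := (1 - t ^ 2) ^ (a - 1 / 2)

lemma gw_integral_beta (a : ℝ) (ha : 0 < a) : ∫ t in (-1 : ℝ)..1, gw a t =
    Real.pi * (2 : ℝ) ^ (1 - 2 * a) * Real.Gamma (2 * a) / (a * Real.Gamma a ^ 2) := by
  have hb := ProbabilityTheory.beta_eq_betaIntegralReal (a + 1 / 2) (a + 1 / 2)
    (by positivity) (by positivity)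
  have hc : Complex.betaIntegral ((a + 1 / 2 : ℝ) : ℂ) ((a + 1 / 2 : ℝ) : ℂ) =
      ((∫ u in (0 : ℝ)..1, u ^ (a - 1 / 2) * (1 - u) ^ (a - 1 / 2) : ℝ) : ℂ) := by
    rw [Complex.betaIntegral, ← intervalIntegral.integral_ofReal]
    refine intervalIntegral.integral_congr fun u hu => ?_
    rw [Set.uIcc_of_le zero_le_one] at hu
    rw [Complex.ofReal_mul, Complex.ofReal_cpow hu.1, Complex.ofReal_cpow (sub_nonneg.2 hu.2)]
    push_cast
    ring_nf
  rw [hc, Complex.ofReal_re] at hb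
  have hs := intervalIntegral.integral_comp_mul_sub (a := 0) (b := 1) (gw a)
    (two_ne_zero' ℝ) 1
  rw [show (2 : ℝ) * 0 - 1 = -1 by norm_num, show (2 : ℝ) * 1 - 1 = 1 by norm_num,
    smul_eq_mul] at hs
  have h4 : ∫ u in (0 : ℝ)..1, gw a (2 * u - 1) =
      4 ^ (a - 1 / 2) * ∫ u in (0 : ℝ)..1, u ^ (a - 1 / 2) * (1 - u) ^ (a - 1 / 2) := by
    rw [← intervalIntegral.integral_const_mul]
    refine intervalIntegral.integral_congr fun u hu => ?_
    rw [Set.uIcc_of_le zero_le_one] at hu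
    simp only [gw]
    rw [← Real.mul_rpow hu.1 (sub_nonneg.2 hu.2), ← Real.mul_rpow (by norm_num)
      (mul_nonneg hu.1 (sub_nonneg.2 hu.2))]
    ring_nf
  have hd := Real.Gamma_mul_Gamma_add_half a
  have hGa := (Real.Gamma_pos_of_pos ha)
  have hG2 : 0 < Real.Gamma (2 * a) := (Real.Gamma_pos_of_pos (by positivity))
  have hG3 : Real.Gamma (a + 1 / 2 + (a + 1 / 2)) = 2 * a * Real.Gamma (2 * a) :=
    Gamma_step (by positivity) (by ring) (by ring)
  have hGh : Real.Gamma (a + 1 / 2) =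
    Real.Gamma (2 * a) * (2 : ℝ) ^ (1 - 2 * a) * √Real.pi / Real.Gamma a := by
    rw [eq_div_iff hGa.ne', ← hd]; ring
  have hp : (4 : ℝ) ^ (a - 1 / 2) * 2 ^ (1 - 2 * a) = 1 := by
    rw [show (4 : ℝ) = 2 ^ (2 : ℝ) by norm_num, ← Real.rpow_mul (by norm_num),
      ← Real.rpow_add (by norm_num)]
    ring_nf; simp
  have hpi : √Real.pi * √Real.pi = Real.pi := Real.mul_self_sqrt Real.pi_pos.le
  have hI : ∫ t in (-1 : ℝ)..1, gw a t = 2 * ∫ u in (0 : ℝ)..1, gw a (2 * u - 1) := by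
    rw [hs]; ring
  rw [hI, h4, ← hb, ProbabilityTheory.beta, hG3, hGh]
  generalize (2 : ℝ) ^ (1 - 2 * a) = p at *
  generalize (4 : ℝ) ^ (a - 1 / 2) = q at *
  field_simp
  rw [Real.sq_sqrt Real.pi_pos.le]
  linear_combination p * Real.pi * hp

lemma gw_integrable (a : ℝ) (ha : 0 < a) : IntervalIntegrable (gw a) volume (-1) 1 := by
  by_contra h
  have h1 := intervalIntegral.integral_undef h
  rw [gw_integral_beta a ha] at h1
  have hGa := (Real.Gamma_pos_of_pos ha)
  have hG2 : 0 < Real.Gamma (2 * a) := (Real.Gamma_pos_of_pos (by positivity))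
  have : 0 < Real.pi * (2 : ℝ) ^ (1 - 2 * a) * Real.Gamma (2 * a) / (a * Real.Gamma a ^ 2) := by
    have := Real.pi_pos
    positivity
  exact this.ne' h1

lemma pw_integrable (a : ℝ) (ha : 0 < a) (p : Polynomial ℝ) :
    IntervalIntegrable (fun t => p.eval t * gw a t) volume (-1) 1 :=
  (gw_integrable a ha).continuousOn_mul p.continuous.continuousOn

/-- The integration functional. -/
noncomputable def Lam (a : ℝ) (p : Polynomial ℝ) : ℝ := ∫ t in (-1 : ℝ)..1, p.eval t * gw a t

lemma Lam_add (a : ℝ) (ha : 0 < a) (p q : Polynomial ℝ) : Lam a (p + q) = Lam a p + Lam a q := by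
  rw [Lam, Lam, Lam, ← intervalIntegral.integral_add (pw_integrable a ha p) (pw_integrable a ha q)]
  simp [add_mul]

lemma Lam_C (a : ℝ) (c : ℝ) (p : Polynomial ℝ) : Lam a (Polynomial.C c * p) = c * Lam a p := by
  rw [Lam, Lam, ← intervalIntegral.integral_const_mul]
  simp [mul_assoc]

lemma Lam_sub (a : ℝ) (ha : 0 < a) (p q : Polynomial ℝ) : Lam a (p - q) = Lam a p - Lam a q := by
  have h := Lam_add a ha (p - q) q
  rw [sub_add_cancel] at h; linarith

open Polynomial in
lemma Lam_parts (a : ℝ) (ha : 0 < a) (p : Polynomial ℝ) :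
    Lam a ((1 - X ^ 2) * derivative p - C (2 * a + 1) * (X * p)) = 0 := by
  have := intervalIntegral.integral_eq_sub_of_hasDerivAt_of_le (a := -1) (b := 1)
    (f := fun t : ℝ => (1 - t ^ 2) ^ (a + 1 / 2) * p.eval t)
    (f' := fun t => ((1 - X ^ 2) * derivative p - C (2 * a + 1) * (X * p)).eval t * gw a t)
    (by norm_num) ?_ ?_ (pw_integrable a ha _)
  · rw [Lam, this]
    have : a + 1 / 2 ≠ 0 := by positivity
    norm_num
    rw [Real.zero_rpow (by positivity)]
    simp
  · refine ContinuousOn.mul ?_ p.continuous.continuousOn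
    refine Continuous.continuousOn ?_
    exact Continuous.rpow_const (by fun_prop) (fun _ => Or.inr (by positivity))
  · intro t ht
    have hpos : 0 < 1 - t ^ 2 := by nlinarith [ht.1, ht.2]
    have h1 : HasDerivAt (fun t : ℝ => 1 - t ^ 2) (-(2 * t)) t := by
      simpa using ((hasDerivAt_pow 2 t).const_sub 1)
    have h2 := (h1.rpow_const (p := a + 1 / 2) (Or.inl hpos.ne')).mul (p.hasDerivAt t)
    refine h2.congr_deriv ?_
    have e1 : (1 - t ^ 2) ^ (a + 1 / 2) = (1 - t ^ 2) * gw a t := by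
      rw [gw, show a + 1 / 2 = 1 + (a - 1 / 2) by ring, Real.rpow_add hpos, Real.rpow_one]
    have e2 : (1 - t ^ 2) ^ (a + 1 / 2 - 1) = gw a t := by
      rw [gw]; ring_nf
    rw [e1, e2]
    simp
    ring

open Polynomial in
lemma Lam_ode (a : ℝ) (ha : 0 < a) (n : ℕ) (q : Polynomial ℝ) :
    Lam a ((1 - X ^ 2) * (derivative (GP a n) * derivative q)) =
      n * (n + 2 * a) * Lam a (GP a n * q) := by
  have h := Lam_parts a ha (derivative (GP a n) * q)
  have e : (1 - X ^ 2) * derivative (derivative (GP a n) * q) -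
      C (2 * a + 1) * (X * (derivative (GP a n) * q)) =
      (1 - X ^ 2) * (derivative (GP a n) * derivative q) -
        C ((n : ℝ) * (n + 2 * a)) * (GP a n * q) := by
    have := GP_ode a ha n
    rw [derivative_mul]
    linear_combination q * this
  rw [e, Lam_sub a ha, Lam_C] at h
  linarith

lemma Lam_orth (a : ℝ) (ha : 0 < a) (n m : ℕ) (h : n ≠ m) : Lam a (GP a n * GP a m) = 0 := by
  have h1 := Lam_ode a ha n (GP a m)
  have h2 := Lam_ode a ha m (GP a n)
  rw [mul_comm (Polynomial.derivative (GP a m)), h1, mul_comm (GP a m)] at h2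
  have h3 : ((n : ℝ) - m) * (n + m + 2 * a) * Lam a (GP a n * GP a m) = 0 := by linarith
  have h4 : (n : ℝ) - m ≠ 0 := sub_ne_zero.2 (by exact_mod_cast h)
  have h5 : (n : ℝ) + m + 2 * a ≠ 0 := by positivity
  simpa [h4, h5] using h3

lemma GP_zero (a : ℝ) (ha : 0 < a) : GP a 0 = 1 := by
  have := (Real.Gamma_pos_of_pos ha).ne'
  simp [GP, gc, this]

lemma GP_one (a : ℝ) (ha : 0 < a) : GP a 1 = Polynomial.C (2 * a) * Polynomial.X := by
  have := (Real.Gamma_pos_of_pos ha).ne'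
  have h : Real.Gamma (1 + a) = a * Real.Gamma a := Gamma_step ha (by ring) rfl
  simp only [GP, gc]
  simp [h]
  field_simp
  ring

open Polynomial in
lemma Lam_step (a : ℝ) (ha : 0 < a) (n : ℕ) :
    ((n : ℝ) + 1) * (n + 1 + a) * Lam a (GP a (n + 1) * GP a (n + 1)) =
      (n + a) * (n + 2 * a) * Lam a (GP a n * GP a n) := by
  have hA : ((n : ℝ) + 1) * Lam a (GP a (n + 1) * GP a (n + 1)) =
      2 * (n + a) * Lam a (X * GP a (n + 1) * GP a n) := by
    rcases n with _ | n
    · have h : GP a (0 + 1) * GP a (0 + 1) = C (2 * a) * (X * GP a (0 + 1) * GP a 0) := by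
        rw [GP_zero a ha]; simp only [zero_add]; nth_rw 1 [GP_one a ha]; ring
      rw [h, Lam_C]; push_cast; ring
    · have h := GP_rec a ha n
      have h' : C ((n : ℝ) + 2) * (GP a (n + 1 + 1) * GP a (n + 1 + 1)) =
          C (2 * (n + 1 + a)) * (X * GP a (n + 1 + 1) * GP a (n + 1)) -
          C (n + 2 * a) * (GP a n * GP a (n + 2)) := by
        linear_combination GP a (n + 2) * h
      have h2 := congrArg (Lam a) h'
      rw [Lam_sub a ha, Lam_C, Lam_C, Lam_C, Lam_orth a ha n (n + 2) (by omega)] at h2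
      push_cast
      linarith
  have hB : 2 * (n + 1 + a) * Lam a (X * GP a (n + 1) * GP a n) =
      (n + 2 * a) * Lam a (GP a n * GP a n) := by
    have h := GP_rec a ha n
    have h' : C ((n : ℝ) + 2) * (GP a (n + 2) * GP a n) =
          C (2 * (n + 1 + a)) * (X * GP a (n + 1) * GP a n) -
          C (n + 2 * a) * (GP a n * GP a n) := by
      linear_combination GP a n * h
    have h2 := congrArg (Lam a) h'
    rw [Lam_sub a ha, Lam_C, Lam_C, Lam_C, Lam_orth a ha (n + 2) n (by omega)] at h2
    linarith
  linear_combination (n + 1 + a) * hA + (n + a) * hB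

lemma Lam_norm (a : ℝ) (ha : 0 < a) (n : ℕ) : Lam a (GP a n * GP a n) =
    Real.pi * (2 : ℝ) ^ (1 - 2 * a) * Real.Gamma ((n : ℝ) + 2 * a) /
        ((Nat.factorial n : ℝ) * ((n : ℝ) + a) * Real.Gamma a ^ 2) := by
  have hGa := (Real.Gamma_pos_of_pos ha).ne'
  induction n with
  | zero =>
    rw [GP_zero a ha]
    simp only [Lam]
    simp
    rw [gw_integral_beta a ha]
  | succ n ih =>
    have h := Lam_step a ha n
    rw [ih] at h
    have h1 : (0 : ℝ) < ((n : ℝ) + 1) * (n + 1 + a) := by positivity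
    have hG : Real.Gamma (((n + 1 : ℕ) : ℝ) + 2 * a) =
        (n + 2 * a) * Real.Gamma ((n : ℝ) + 2 * a) :=
      Gamma_step (by positivity) (by push_cast; ring) rfl
    rw [eq_div_of_mul_eq h1.ne' ((mul_comm _ _).trans h), hG, Nat.factorial_succ]
    push_cast
    field_simp

lemma sub_image (L α : ℝ) (hL : 0 < L) (hα : 0 < α) :
    (fun x : ℝ => (x ^ α - L) / (x ^ α + L)) '' Set.Ioi 0 = Set.Ioo (-1) 1 := by
  ext t
  constructor
  · rintro ⟨x, hx, rfl⟩
    have h : 0 < x ^ α := Real.rpow_pos_of_pos hx α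
    constructor
    · rw [lt_div_iff₀ (by positivity)]; linarith
    · rw [div_lt_iff₀ (by positivity)]; linarith
  · rintro ⟨h1, h2⟩
    have h3 : 0 < 1 + t := by linarith
    have h4 : 0 < 1 - t := by linarith
    have h5 : 0 < L * (1 + t) / (1 - t) := by positivity
    refine ⟨(L * (1 + t) / (1 - t)) ^ (1 / α), Real.rpow_pos_of_pos h5 _, ?_⟩
    simp only
    rw [← Real.rpow_mul h5.le, one_div_mul_cancel hα.ne', Real.rpow_one]
    have h6 : L * (1 + t) / (1 - t) + L ≠ 0 := by positivity
    rw [div_eq_iff h6]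
    field_simp
    ring

lemma sub_inj (L α : ℝ) (hL : 0 < L) (hα : 0 < α) :
    Set.InjOn (fun x : ℝ => (x ^ α - L) / (x ^ α + L)) (Set.Ioi 0) := by
  intro x hx y hy h
  have h1 : 0 < x ^ α := Real.rpow_pos_of_pos hx α
  have h2 : 0 < y ^ α := Real.rpow_pos_of_pos hy α
  simp only at h
  rw [div_eq_div_iff (by positivity) (by positivity)] at h
  have h3 : x ^ α = y ^ α := by
    have : 2 * L * (x ^ α - y ^ α) = 0 := by linarith
    have h4 : 2 * L ≠ 0 := by positivity
    have := (mul_eq_zero.1 this).resolve_left h4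
    linarith
  exact (Real.rpow_left_inj (le_of_lt hx) (le_of_lt hy) hα.ne').1 h3

lemma sub_deriv (L α : ℝ) (hL : 0 < L) (x : ℝ) (hx : 0 < x) :
    HasDerivAt (fun x : ℝ => (x ^ α - L) / (x ^ α + L))
      (2 * α * L * x ^ (α - 1) / (x ^ α + L) ^ 2) x := by
  have h : 0 < x ^ α := Real.rpow_pos_of_pos hx α
  have h1 := Real.hasDerivAt_rpow_const (p := α) (Or.inl hx.ne')
  have h2 := (h1.sub_const L).div (h1.add_const L) (by positivity)
  refine h2.congr_deriv ?_
  ring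

lemma main_aux (a L α : ℝ) (hL : 0 < L) (hα : 0 < α) (n m : ℕ) :
    ∫ x in Set.Ioi (0 : ℝ), FRG a L α n x * FRG a L α m x * FRGweight a L α x =
      Lam a (GP a n * GP a m) := by
  rw [Lam, intervalIntegral.integral_of_le (by norm_num), integral_Ioc_eq_integral_Ioo,
    ← sub_image L α hL hα, integral_image_eq_integral_abs_deriv_smul measurableSet_Ioi
      (fun x hx => (sub_deriv L α hL x hx).hasDerivWithinAt) (sub_inj L α hL hα)]
  refine setIntegral_congr_fun measurableSet_Ioi fun x hx => ?_
  have hx' : (0 : ℝ) < x := hx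
  have h : 0 < 2 * α * L * x ^ (α - 1) / (x ^ α + L) ^ 2 := by positivity
  simp only [FRG, FRGweight, abs_of_pos h, smul_eq_mul, Polynomial.eval_mul, GP_eval, gw]
  ring

/-- Orthogonality of the fractional rational Gegenbauer functions on `(0, ∞)`:
`∫₀^∞ FRG_n FRG_m w dx = π 2^{1−2a} Γ(n+2a)/(n!(n+a)Γ(a)²) δ_{nm}`. -/
theorem stmt_4 (a L α : ℝ) (ha : 0 < a) (hL : 0 < L) (hα : 0 < α) (n m : ℕ) :
    ∫ x in Set.Ioi (0 : ℝ), FRG a L α n x * FRG a L α m x * FRGweight a L α x =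
      Real.pi * (2 : ℝ) ^ (1 - 2 * a) * Real.Gamma ((n : ℝ) + 2 * a) /
        ((Nat.factorial n : ℝ) * ((n : ℝ) + a) * Real.Gamma a ^ 2) *
        (if n = m then 1 else 0) := by

  rw [main_aux a L α hL hα]
  split_ifs with h
  · subst h
    rw [Lam_norm a ha, mul_one]
  · rw [Lam_orth a ha n m h, mul_zero]
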